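/- Let μ be a non-degenerate probability measure on ℝ with finite second moment, mean ∫x dμ = β and variance ∫(x−β)² dμ = α > 0. Then there exists a probability measure ω on ℝ such that for every z in the upper half-plane ℂ⁺, G_μ(z) = 1/(z − β − α·G_ω(z)); equivalently, F_μ(z) = z − β − α/F_ω(z) where F_μ = 1/G_μ. -/

import Mathlib

open MeasureTheory

noncomputable section

/-- The Cauchy–Stieltjes transform `G_μ(z) = ∫ (z − x)⁻¹ dμ(x)`. -/
def cauchyG (μ : Measure ℝ) (z : ℂ) : ℂ := ∫ x, (z - (x : ℂ))⁻¹ ∂μ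

/-!
Multiplication by `x` on `L²(μ)` is a Jacobi operator whose first coefficients are the mean `β` and
the standard deviation `√α`. Compressing it to the orthogonal complement of the constants strips
these off: by a Schur complement, `ω` is the spectral measure, at the normalized vector
`(x - β) / √α`, of the compressed operator. If `μ` has finite support all this happens in a
finite-dimensional space.

In general, approximate `μ` by the laws of simple functions. The functional equation determines the
transforms of the approximating `ω`'s, so they converge pointwise on the upper half-plane, and since
`y²/(x² + y²) = Re (iy / (iy - x))`, the condition `iy G(iy) → 1` on the limit `G` prevents mass
from escaping to infinity. Finite variance of `μ` is what gives this condition, through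
`(z - β) ((z - β) G_μ(z) - 1) = ∫ (x - β)² / (z - x) dμ(x)`.
-/

open Filter Topology ProbabilityTheory Complex
open scoped InnerProductSpace

section Kernel

variable {z : ℂ} {μ : Measure ℝ}

theorem sub_ofReal_ne_zero (hz : 0 < z.im) (x : ℝ) : z - x ≠ 0 := by
  rw [sub_ne_zero]
  rintro rfl
  simp at hz

theorem norm_inv_sub_ofReal_le (hz : 0 < z.im) (x : ℝ) : ‖(z - x)⁻¹‖ ≤ z.im⁻¹ := by
  rw [norm_inv]
  exact inv_anti₀ hz (by simpa using im_le_norm (z - x))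

theorem im_inv_sub_ofReal_neg (hz : 0 < z.im) (x : ℝ) : ((z - x)⁻¹).im < 0 := by
  rw [inv_im]
  exact div_neg_of_neg_of_pos (by simpa using hz) (normSq_pos.2 (sub_ofReal_ne_zero hz x))

theorem continuous_inv_sub_ofReal (hz : 0 < z.im) : Continuous fun x : ℝ => (z - x)⁻¹ :=
  Continuous.inv₀ (by fun_prop) (sub_ofReal_ne_zero hz)

theorem integrable_inv_sub_ofReal [IsFiniteMeasure μ] (hz : 0 < z.im) :
    Integrable (fun x : ℝ => (z - x)⁻¹) μ :=
  .of_bound (continuous_inv_sub_ofReal hz).aestronglyMeasurable z.im⁻¹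
    (.of_forall (norm_inv_sub_ofReal_le hz))

theorem im_cauchyG_neg [IsFiniteMeasure μ] [NeZero μ] (hz : 0 < z.im) : (cauchyG μ z).im < 0 := by
  have hint := integrable_inv_sub_ofReal (μ := μ) hz
  have hsupport : (Function.support fun x : ℝ => -((z - x)⁻¹).im) = Set.univ :=
    Set.eq_univ_of_forall fun x => (neg_pos.2 (im_inv_sub_ofReal_neg hz x)).ne'
  have hpos : 0 < ∫ x : ℝ, -((z - x)⁻¹).im ∂μ := by
    rw [integral_pos_iff_support_of_nonneg
      (fun x => (neg_pos.2 (im_inv_sub_ofReal_neg hz x)).le) hint.im.neg, hsupport]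
    exact Measure.measure_univ_pos.2 (NeZero.ne μ)
  have him : ∫ x : ℝ, ((z - x)⁻¹).im ∂μ = (cauchyG μ z).im := integral_im hint
  rw [integral_neg, him] at hpos
  exact neg_pos.1 hpos

theorem cauchyG_ne_zero [IsFiniteMeasure μ] [NeZero μ] (hz : 0 < z.im) : cauchyG μ z ≠ 0 :=
  fun h => (im_cauchyG_neg (μ := μ) hz).ne (by simp [h])

theorem cauchyG_map {Ω : Type*} [MeasurableSpace Ω] {P : Measure Ω} {X : Ω → ℝ}
    (hX : AEMeasurable X P) (hz : 0 < z.im) :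
    cauchyG (P.map X) z = ∫ ω, (z - X ω)⁻¹ ∂P :=
  integral_map hX (continuous_inv_sub_ofReal hz).aestronglyMeasurable

end Kernel

section Spectral

variable {E : Type*} [NormedAddCommGroup E] [InnerProductSpace ℂ E] [FiniteDimensional ℂ E]
  {T : E →ₗ[ℂ] E} {z : ℂ}

/-- The spectral measure of a symmetric operator `T` at `v`: the measure with
`∫ f dμ = ⟪v, f(T) v⟫`, which puts mass `|⟪b, v⟫|²` at the eigenvalue of each vector `b` of an
orthonormal eigenbasis. -/
def spectralMeasure (hT : T.IsSymmetric) (v : E) : Measure ℝ :=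
  ∑ i, ENNReal.ofReal (‖⟪hT.eigenvectorBasis rfl i, v⟫_ℂ‖ ^ 2) •
    Measure.dirac (hT.eigenvalues rfl i)

theorem isProbabilityMeasure_spectralMeasure (hT : T.IsSymmetric) {v : E} (hv : ‖v‖ = 1) :
    IsProbabilityMeasure (spectralMeasure hT v) := by
  constructor
  simp only [spectralMeasure, Measure.coe_finsetSum, Finset.sum_apply, Measure.smul_apply,
    measure_univ, smul_eq_mul, mul_one]
  rw [← ENNReal.ofReal_sum_of_nonneg fun _ _ => sq_nonneg _,
    OrthonormalBasis.sum_sq_norm_inner_right, hv, one_pow, ENNReal.ofReal_one]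

theorem cauchyG_spectralMeasure (hT : T.IsSymmetric) (v : E) (z : ℂ) :
    cauchyG (spectralMeasure hT v) z =
      ∑ i, ((‖⟪hT.eigenvectorBasis rfl i, v⟫_ℂ‖ ^ 2 : ℝ) : ℂ) *
        (z - hT.eigenvalues rfl i)⁻¹ := by
  rw [cauchyG, spectralMeasure, integral_finsetSum_measure fun i _ =>
    (integrable_dirac (by simp)).smul_measure ENNReal.ofReal_ne_top]
  simp only [integral_smul_measure, integral_dirac, ENNReal.toReal_ofReal (sq_nonneg _), real_smul]

theorem inner_eq_mul_cauchyG_spectralMeasure (hT : T.IsSymmetric) {u v : E} {c : ℂ}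
    (hz : 0 < z.im) (hu : z • u - T u = c • v) :
    ⟪v, u⟫_ℂ = c * cauchyG (spectralMeasure hT v) z := by
  set b := hT.eigenvectorBasis rfl with hb
  set l := hT.eigenvalues rfl with hl
  have hcoord (i) : ⟪b i, u⟫_ℂ = c * ⟪b i, v⟫_ℂ * (z - l i)⁻¹ := by
    have h : z * ⟪b i, u⟫_ℂ - l i * ⟪b i, u⟫_ℂ = c * ⟪b i, v⟫_ℂ := by
      rw [← inner_smul_right (b i) v, ← hu, inner_sub_right, inner_smul_right, ← hT, hb,
        hT.apply_eigenvectorBasis rfl i, inner_smul_left, hl, RCLike.conj_ofReal]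
      rfl
    rw [eq_mul_inv_iff_mul_eq₀ (sub_ofReal_ne_zero hz _), ← h]
    ring
  rw [cauchyG_spectralMeasure, ← b.sum_inner_mul_inner, Finset.mul_sum]
  refine Finset.sum_congr rfl fun i _ => ?_
  have hnorm : ((‖⟪b i, v⟫_ℂ‖ ^ 2 : ℝ) : ℂ) = ⟪v, b i⟫_ℂ * ⟪b i, v⟫_ℂ := by
    rw [← inner_conj_symm v (b i), conj_mul', ofReal_pow]
  rw [hcoord, hnorm]
  ring

/-- The compression `P T|_K` of `T` to a subspace `K`, where `P` is the orthogonal projection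
onto `K`, written as the adjoint of the inclusion. -/
def compression (T : E →ₗ[ℂ] E) (K : Submodule ℂ E) : K →ₗ[ℂ] K :=
  K.subtype.adjoint ∘ₗ T ∘ₗ K.subtype

theorem isSymmetric_compression (hT : T.IsSymmetric) (K : Submodule ℂ E) :
    (compression T K).IsSymmetric :=
  hT.adjoint_conj K.subtype

theorem inner_compression_right (K : Submodule ℂ E) (x y : K) :
    ⟪x, compression T K y⟫_ℂ = ⟪(x : E), T y⟫_ℂ :=
  LinearMap.adjoint_inner_right K.subtype x (T y)

theorem inner_mul_sub_cauchyG_compression (hT : T.IsSymmetric) {e u : E} (he : ‖e‖ = 1)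
    {v : (ℂ ∙ e)ᗮ} {a β : ℝ} (hTe : T e = (β : ℂ) • e + (a : ℂ) • (v : E))
    (hz : 0 < z.im) (hu : z • u - T u = e) :
    ⟪e, u⟫_ℂ * (z - β -
      (a : ℂ) ^ 2 * cauchyG (spectralMeasure (isSymmetric_compression hT (ℂ ∙ e)ᗮ) v) z) = 1 := by
  have hee : ⟪e, e⟫_ℂ = 1 := by simp [inner_self_eq_norm_sq_to_K, he]
  have hxe (x : (ℂ ∙ e)ᗮ) : ⟪(x : E), e⟫_ℂ = 0 :=
    Submodule.mem_orthogonal_singleton_iff_inner_left.1 x.2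
  set s := ⟪e, u⟫_ℂ
  obtain ⟨k, hk⟩ : ∃ k : (ℂ ∙ e)ᗮ, (k : E) = u - s • e :=
    ⟨⟨u - s • e, Submodule.mem_orthogonal_singleton_iff_inner_right.2
      (by rw [inner_sub_right, inner_smul_right, hee, mul_one, sub_self])⟩, rfl⟩
  have hresolvent : z • k - compression T (ℂ ∙ e)ᗮ k = (s * a) • v := by
    refine ext_inner_left ℂ fun x => ?_
    rw [inner_sub_right, inner_compression_right, Submodule.coe_inner, ← inner_sub_right]
    have : z • (k : E) - T k = e - (s * z) • e + s • T e := by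
      rw [hk, ← hu, map_sub, map_smul]
      module
    simp only [Submodule.coe_smul, this, hTe, inner_add_right, inner_sub_right, inner_smul_right,
      hxe, Submodule.coe_inner]
    ring
  have hvu : ⟪(v : E), u⟫_ℂ =
      s * a * cauchyG (spectralMeasure (isSymmetric_compression hT (ℂ ∙ e)ᗮ) v) z := by
    rw [← inner_eq_mul_cauchyG_spectralMeasure _ hz hresolvent, Submodule.coe_inner, hk,
      inner_sub_right, inner_smul_right, hxe, mul_zero, sub_zero]
  have hfirst : z * s - (β * s + a * ⟪(v : E), u⟫_ℂ) = 1 := by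
    rw [← hee, ← congrArg (inner ℂ e) hu, inner_sub_right, inner_smul_right, ← hT, hTe,
      inner_add_left, inner_smul_left, inner_smul_left, conj_ofReal, conj_ofReal]
  rw [hvu] at hfirst
  linear_combination hfirst

end Spectral

section StrippedTransform

/-- `h` is, on the upper half-plane, the Cauchy–Stieltjes transform of a probability measure. -/
def IsCauchyTransform (h : ℂ → ℂ) : Prop :=
  ∃ ω : ProbabilityMeasure ℝ, ∀ z : ℂ, 0 < z.im → cauchyG ω z = h z

/-- The function `(z - β - 1 / G_μ(z)) / α`, where `β` and `α` are the mean and the variance of `μ`: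
the transform obtained from `G_μ` by stripping off its first Jacobi coefficients. -/
def strippedG (μ : Measure ℝ) (z : ℂ) : ℂ :=
  (z - (∫ x, x ∂μ : ℝ) - (cauchyG μ z)⁻¹) / (Var[id; μ] : ℝ)

theorem eq_strippedG_iff {μ : Measure ℝ} [IsProbabilityMeasure μ] (hvar : Var[id; μ] ≠ 0) {z w : ℂ}
    (hz : 0 < z.im) :
    w = strippedG μ z ↔ cauchyG μ z * (z - (∫ x, x ∂μ : ℝ) - (Var[id; μ] : ℝ) * w) = 1 := by
  rw [strippedG, eq_div_iff (ofReal_ne_zero.2 hvar)]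
  refine ⟨fun h => ?_, fun h => ?_⟩
  · rw [mul_comm _ w, h, sub_sub_cancel, mul_inv_cancel₀ (cauchyG_ne_zero hz)]
  · rw [← eq_inv_of_mul_eq_one_right h]
    ring

end StrippedTransform

section FiniteSupport

variable {μ : Measure ℝ} {s : Finset ℝ}

/-- The map from functions to `L²(μ)`, for a measure `μ` supported in the finite set `s`. The space
`L²(μ)` is modelled by `EuclideanSpace ℂ s`, the square roots of the weights being absorbed into the
coordinates. -/
def toFinsetL2 (μ : Measure ℝ) (s : Finset ℝ) : (ℝ → ℂ) →ₗ[ℂ] EuclideanSpace ℂ s where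
  toFun g := WithLp.toLp 2 fun x => (√(μ.real {(x : ℝ)}) : ℂ) * g x
  map_add' g h := by ext x; simp [mul_add]
  map_smul' c g := by ext x; simp [mul_left_comm]

theorem inner_toFinsetL2 [IsFiniteMeasure μ] (hs : μ (s : Set ℝ)ᶜ = 0) (g h : ℝ → ℂ) :
    ⟪toFinsetL2 μ s g, toFinsetL2 μ s h⟫_ℂ = ∫ x, starRingEnd ℂ (g x) * h x ∂μ := by
  have hrestrict : μ.restrict s = μ := Measure.restrict_eq_self_of_ae_mem hs
  have hsqrt (x : ℝ) : (√(μ.real {x}) : ℂ) * √(μ.real {x}) = μ.real {x} := by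
    rw [← ofReal_mul, Real.mul_self_sqrt measureReal_nonneg]
  rw [← hrestrict, setIntegral_finset _ (.finset), hrestrict, ← Finset.sum_coe_sort,
    PiLp.inner_apply]
  refine Finset.sum_congr rfl fun x _ => ?_
  simp only [toFinsetL2, LinearMap.coe_mk, AddHom.coe_mk, RCLike.inner_apply, map_mul, conj_ofReal,
    real_smul, ← hsqrt]
  ring

theorem inner_toFinsetL2_ofReal [IsFiniteMeasure μ] (hs : μ (s : Set ℝ)ᶜ = 0) (g h : ℝ → ℝ) :
    ⟪toFinsetL2 μ s fun x => g x, toFinsetL2 μ s fun x => h x⟫_ℂ = (∫ x, g x * h x ∂μ : ℝ) := by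
  rw [inner_toFinsetL2 hs, ← integral_complex_ofReal]
  simp

theorem norm_sq_toFinsetL2_ofReal [IsFiniteMeasure μ] (hs : μ (s : Set ℝ)ᶜ = 0) (g : ℝ → ℝ) :
    ‖toFinsetL2 μ s fun x => g x‖ ^ 2 = ∫ x, g x ^ 2 ∂μ := by
  rw [← inner_self_eq_norm_sq (𝕜 := ℂ), inner_toFinsetL2_ofReal hs, RCLike.re_to_complex, ofReal_re]
  simp only [sq]

/-- Multiplication by `x` on `EuclideanSpace ℂ s`. -/
def coordinateOperator (s : Finset ℝ) : EuclideanSpace ℂ s →ₗ[ℂ] EuclideanSpace ℂ s :=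
  (Matrix.diagonal fun x : s => ((x : ℝ) : ℂ)).toEuclideanLin

theorem isSymmetric_coordinateOperator (s : Finset ℝ) : (coordinateOperator s).IsSymmetric :=
  Matrix.isSymmetric_toEuclideanLin_iff.2
    (Matrix.isHermitian_diagonal_iff.2 fun x => conj_ofReal x)

theorem coordinateOperator_toFinsetL2 (g : ℝ → ℂ) :
    coordinateOperator s (toFinsetL2 μ s g) = toFinsetL2 μ s fun x => x * g x := by
  ext x
  simp [coordinateOperator, toFinsetL2, Matrix.mulVec_diagonal, mul_left_comm]

theorem integrable_of_measure_compl_finset [IsFiniteMeasure μ] (hs : μ (s : Set ℝ)ᶜ = 0)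
    (g : ℝ → ℝ) : Integrable g μ := by
  rw [← Measure.restrict_eq_self_of_ae_mem (s := (s : Set ℝ)) hs]
  exact IntegrableOn.finset

theorem smul_sub_coordinateOperator_toFinsetL2_inv {z : ℂ} (hz : 0 < z.im) :
    z • toFinsetL2 μ s (fun x => (z - x)⁻¹) -
      coordinateOperator s (toFinsetL2 μ s fun x => (z - x)⁻¹) = toFinsetL2 μ s fun _ => 1 := by
  rw [coordinateOperator_toFinsetL2, ← map_smul, ← map_sub]
  congr 1
  ext x
  simp [← sub_mul, sub_ofReal_ne_zero hz x]

theorem coordinateOperator_toFinsetL2_one (β : ℝ) {a : ℝ} (ha : a ≠ 0) :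
    coordinateOperator s (toFinsetL2 μ s fun _ => 1) =
      (β : ℂ) • toFinsetL2 μ s (fun _ => 1) +
        (a : ℂ) • toFinsetL2 μ s fun x => ((x - β) / a : ℝ) := by
  rw [coordinateOperator_toFinsetL2, ← map_smul, ← map_smul, ← map_add]
  congr 1
  ext x
  simp [mul_div_cancel₀ _ (ofReal_ne_zero.2 ha)]

theorem norm_toFinsetL2_one [IsProbabilityMeasure μ] (hs : μ (s : Set ℝ)ᶜ = 0) :
    ‖toFinsetL2 μ s fun _ => 1‖ = 1 := by
  rw [← sq_eq_sq₀ (norm_nonneg _) zero_le_one]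
  simpa only [ofReal_one, one_pow, integral_const, probReal_univ, one_smul] using
    norm_sq_toFinsetL2_ofReal hs fun _ => 1

theorem norm_toFinsetL2_standardized [IsProbabilityMeasure μ] (hs : μ (s : Set ℝ)ᶜ = 0)
    (hvar : 0 < Var[id; μ]) :
    ‖toFinsetL2 μ s fun x => ((x - ∫ y, y ∂μ) / √Var[id; μ] : ℝ)‖ = 1 := by
  rw [← sq_eq_sq₀ (norm_nonneg _) zero_le_one, norm_sq_toFinsetL2_ofReal hs]
  simp only [div_pow, integral_div, Real.sq_sqrt hvar.le]
  rw [variance_eq_integral aemeasurable_id] at hvar ⊢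
  exact (div_self hvar.ne').trans (one_pow 2).symm

theorem inner_toFinsetL2_one_standardized [IsProbabilityMeasure μ] (hs : μ (s : Set ℝ)ᶜ = 0)
    (a : ℝ) :
    ⟪toFinsetL2 μ s fun _ => 1, toFinsetL2 μ s fun x => ((x - ∫ y, y ∂μ) / a : ℝ)⟫_ℂ = 0 := by
  have h := inner_toFinsetL2_ofReal hs (fun _ => 1) fun x => (x - ∫ y, y ∂μ) / a
  simp only [one_mul, integral_div] at h
  rw [integral_sub (integrable_of_measure_compl_finset hs _) (integrable_const _)] at h
  simpa using h

theorem isCauchyTransform_strippedG_of_finset [IsProbabilityMeasure μ]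
    (hs : μ (s : Set ℝ)ᶜ = 0) (hvar : 0 < Var[id; μ]) : IsCauchyTransform (strippedG μ) := by
  let e := toFinsetL2 μ s fun _ => 1
  let v : (ℂ ∙ e)ᗮ := ⟨_, Submodule.mem_orthogonal_singleton_iff_inner_right.2
    (inner_toFinsetL2_one_standardized hs √Var[id; μ])⟩
  let hT := isSymmetric_compression (isSymmetric_coordinateOperator s) (ℂ ∙ e)ᗮ
  refine ⟨⟨spectralMeasure hT v, isProbabilityMeasure_spectralMeasure hT
    (norm_toFinsetL2_standardized hs hvar)⟩, fun z hz => ?_⟩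
  have hG : ⟪e, toFinsetL2 μ s fun x => (z - x)⁻¹⟫_ℂ = cauchyG μ z := by
    simp [e, inner_toFinsetL2 hs, cauchyG]
  have hsq : ((Var[id; μ] : ℝ) : ℂ) = (√Var[id; μ] : ℂ) ^ 2 := by
    rw [← ofReal_pow, Real.sq_sqrt hvar.le]
  rw [eq_strippedG_iff hvar.ne' hz, hsq, ← hG]
  exact inner_mul_sub_cauchyG_compression (v := v) (isSymmetric_coordinateOperator s)
    (norm_toFinsetL2_one hs) (coordinateOperator_toFinsetL2_one _ (Real.sqrt_pos.2 hvar).ne') hz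
    (smul_sub_coordinateOperator_toFinsetL2_inv hz)

end FiniteSupport

section ImaginaryAxis

variable {μ : Measure ℝ}

theorem im_I_mul_ofReal_pos {y : ℝ} (hy : 0 < y) : 0 < (I * (y : ℂ)).im := by
  simpa using hy

theorem norm_I_mul_mul_inv_sub_le {y : ℝ} (hy : 0 < y) (x : ℝ) :
    ‖I * y * (I * y - x)⁻¹‖ ≤ 1 := by
  have h := norm_inv_sub_ofReal_le (im_I_mul_ofReal_pos hy) x
  rw [I_mul_im, ofReal_re] at h
  calc ‖I * y * (I * y - x)⁻¹‖ = y * ‖(I * y - x)⁻¹‖ := by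
        rw [norm_mul, norm_mul, norm_I, one_mul, norm_real, Real.norm_of_nonneg hy.le]
    _ ≤ y * y⁻¹ := by gcongr
    _ = 1 := mul_inv_cancel₀ hy.ne'

theorem tendsto_I_mul_mul_inv_sub (x : ℝ) :
    Tendsto (fun y : ℝ => I * y * (I * y - x)⁻¹) atTop (𝓝 1) := by
  have hcobounded : Tendsto (fun y : ℝ => I * y - x) atTop (Bornology.cobounded ℂ) := by
    rw [← tendsto_norm_atTop_iff_cobounded]
    refine tendsto_atTop_mono' _ ?_ tendsto_id
    filter_upwards with y
    simpa using im_le_norm (I * y - x)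
  have h := ((tendsto_inv₀_cobounded.comp hcobounded).const_mul (x : ℂ)).const_add 1
  rw [mul_zero, add_zero] at h
  refine h.congr' ?_
  filter_upwards [eventually_gt_atTop 0] with y hy
  rw [Function.comp_apply, ← mul_inv_cancel₀ (sub_ofReal_ne_zero (im_I_mul_ofReal_pos hy) x),
    ← add_mul, sub_add_cancel]

theorem tendsto_I_mul_integral_mul_inv_sub {g : ℝ → ℂ} (hg : Integrable g μ) :
    Tendsto (fun y : ℝ => I * y * ∫ x, g x * (I * y - x)⁻¹ ∂μ) atTop (𝓝 (∫ x, g x ∂μ)) := by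
  simp_rw [← integral_const_mul, mul_left_comm (_ * _) (g _)]
  refine tendsto_integral_filter_of_dominated_convergence (fun x => ‖g x‖) ?_ ?_ hg.norm ?_
  · filter_upwards [eventually_gt_atTop 0] with y hy
    exact hg.aestronglyMeasurable.mul ((continuous_inv_sub_ofReal
      (im_I_mul_ofReal_pos hy)).aestronglyMeasurable.const_mul _)
  · filter_upwards [eventually_gt_atTop 0] with y hy
    filter_upwards with x
    rw [norm_mul]
    exact mul_le_of_le_one_right (norm_nonneg _) (norm_I_mul_mul_inv_sub_le hy x)
  · filter_upwards with x
    simpa using (tendsto_I_mul_mul_inv_sub x).const_mul (g x)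

theorem tendsto_I_mul_cauchyG [IsProbabilityMeasure μ] :
    Tendsto (fun y : ℝ => I * y * cauchyG μ (I * y)) atTop (𝓝 1) := by
  simpa [cauchyG] using tendsto_I_mul_integral_mul_inv_sub (integrable_const (μ := μ) (1 : ℂ))

theorem integral_sub_mean_sq_mul_inv_sub [IsProbabilityMeasure μ] (hμ : Integrable (fun x => x) μ)
    {z : ℂ} (hz : 0 < z.im) :
    ∫ x, ((x - ∫ t, t ∂μ) ^ 2 : ℝ) * (z - x)⁻¹ ∂μ =
      (z - (∫ t, t ∂μ : ℝ)) * ((z - (∫ t, t ∂μ : ℝ)) * cauchyG μ z - 1) := by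
  set β := ∫ t, t ∂μ with hβ
  have hpointwise (x : ℝ) : ((x - β) ^ 2 : ℝ) * (z - x)⁻¹ =
      (z - β) ^ 2 * (z - x)⁻¹ - ((z - β) + (x - β : ℝ)) := by
    have := sub_ofReal_ne_zero hz x
    push_cast
    field_simp
    ring
  have hcentered : Integrable (fun x : ℝ => ((x - β : ℝ) : ℂ)) μ :=
    (hμ.sub (integrable_const β)).ofReal
  have hcentered_zero : ∫ x, ((x - β : ℝ) : ℂ) ∂μ = 0 := by
    rw [integral_complex_ofReal, integral_sub hμ (integrable_const β)]
    simp [hβ]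
  have hlinear : Integrable (fun x : ℝ => (z - β) + ((x - β : ℝ) : ℂ)) μ :=
    (integrable_const _).add hcentered
  simp_rw [hpointwise]
  rw [integral_sub ((integrable_inv_sub_ofReal hz).const_mul _) hlinear, integral_const_mul,
    integral_add (integrable_const _) hcentered, hcentered_zero, integral_const, probReal_univ,
    one_smul, ← cauchyG]
  ring

theorem tendsto_I_mul_strippedG [IsProbabilityMeasure μ] (hμ : MemLp id 2 μ)
    (hvar : Var[id; μ] ≠ 0) :
    Tendsto (fun y : ℝ => I * y * strippedG μ (I * y)) atTop (𝓝 1) := by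
  set β := ∫ t, t ∂μ with hβ
  have hvar' : ((Var[id; μ] : ℝ) : ℂ) ≠ 0 := ofReal_ne_zero.2 hvar
  have hsq : Tendsto (fun y : ℝ => I * y * ∫ x, ((x - β) ^ 2 : ℝ) * (I * y - x)⁻¹ ∂μ) atTop
      (𝓝 (Var[id; μ] : ℝ)) := by
    rw [variance_eq_integral aemeasurable_id, ← integral_complex_ofReal]
    exact tendsto_I_mul_integral_mul_inv_sub (hμ.sub (memLp_const β)).integrable_sq.ofReal
  have h := (hsq.mul (tendsto_I_mul_mul_inv_sub β)).div
    ((tendsto_I_mul_cauchyG (μ := μ)).const_mul ((Var[id; μ] : ℝ) : ℂ)) (by simpa using hvar')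
  rw [mul_one, div_self hvar'] at h
  refine h.congr' ?_
  filter_upwards [eventually_gt_atTop 0] with y hy
  have hz := im_I_mul_ofReal_pos hy
  have hz_ne : I * (y : ℂ) ≠ 0 := by simpa using hy.ne'
  have hG := cauchyG_ne_zero (μ := μ) hz
  have hβ_ne := sub_ofReal_ne_zero hz β
  rw [Pi.div_apply, integral_sub_mean_sq_mul_inv_sub (hμ.integrable one_le_two) hz, strippedG, ← hβ]
  generalize I * (y : ℂ) = z at *
  field_simp

end ImaginaryAxis

section Limits

variable {ω : ℕ → ProbabilityMeasure ℝ} {h : ℂ → ℂ}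

theorem re_I_mul_mul_inv_sub {r : ℝ} (hr : 0 < r) (x : ℝ) :
    (I * r * (I * r - x)⁻¹).re = r ^ 2 / (x ^ 2 + r ^ 2) := by
  have : x ^ 2 + r ^ 2 ≠ 0 := by positivity
  simp only [mul_re, I_re, ofReal_re, zero_mul, I_im, ofReal_im, mul_zero, sub_self, inv_re, sub_re,
    zero_sub, normSq_apply, mul_neg, neg_mul, neg_neg, sub_im, mul_im, one_mul, zero_add, sub_zero,
    inv_im]
  field_simp

theorem measure_norm_gt_le_cauchyG (ν : Measure ℝ) [IsProbabilityMeasure ν] {r : ℝ} (hr : 0 < r) :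
    ν {x | r < ‖x‖} ≤ ENNReal.ofReal (2 * (1 - (I * r * cauchyG ν (I * r)).re)) := by
  have hint : Integrable (fun x : ℝ => I * r * (I * r - x)⁻¹) ν :=
    (integrable_inv_sub_ofReal (im_I_mul_ofReal_pos hr)).const_mul _
  have hre : Integrable (fun x : ℝ => r ^ 2 / (x ^ 2 + r ^ 2)) ν :=
    hint.re.congr (.of_forall (re_I_mul_mul_inv_sub hr))
  have hintegral : (I * r * cauchyG ν (I * r)).re = ∫ x, r ^ 2 / (x ^ 2 + r ^ 2) ∂ν := by
    simp_rw [cauchyG, ← integral_const_mul, ← re_I_mul_mul_inv_sub hr]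
    exact (integral_re hint).symm
  have hmarkov := mul_meas_ge_le_integral_of_nonneg (μ := ν) (ε := 1 / 2)
    (f := fun x => 1 - r ^ 2 / (x ^ 2 + r ^ 2))
    (.of_forall fun x => sub_nonneg.2 (div_le_one_of_le₀ (by nlinarith) (by positivity)))
    ((integrable_const 1).sub hre)
  have hsubset : {x : ℝ | r < ‖x‖} ⊆ {x | 1 / 2 ≤ 1 - r ^ 2 / (x ^ 2 + r ^ 2)} := by
    intro x hx
    have : r ^ 2 < x ^ 2 := sq_lt_sq.2 (by rwa [abs_of_pos hr])
    rw [Set.mem_ofPred_eq, le_sub_comm, div_le_iff₀ (by positivity)]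
    linarith
  rw [integral_sub (integrable_const 1) hre, ← hintegral, integral_const, probReal_univ, one_smul]
    at hmarkov
  rw [← ofReal_measureReal]
  exact ENNReal.ofReal_le_ofReal (by linarith [measureReal_mono (μ := ν) hsubset])

theorem isTightMeasureSet_range_of_tendsto_cauchyG
    (hlim : ∀ z : ℂ, 0 < z.im → Tendsto (fun n => cauchyG (ω n) z) atTop (𝓝 (h z)))
    (hinf : Tendsto (fun y : ℝ => I * y * h (I * y)) atTop (𝓝 1)) :
    IsTightMeasureSet (Set.range fun n => (ω n : Measure ℝ)) := by
  let tail (w : ℂ) := ENNReal.ofReal (2 * (1 - w.re))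
  have htail : Continuous tail := ENNReal.continuous_ofReal.comp (by fun_prop)
  refine isTightMeasureSet_range_of_tendsto_limsup_measure_norm_gt <|
    tendsto_of_tendsto_of_tendsto_of_le_of_le' tendsto_const_nhds
      (h := fun r : ℝ => tail (I * r * h (I * r))) ?_ (.of_forall fun _ => zero_le) ?_
  · have htail_one : tail 1 = 0 := by simp [tail]
    exact htail_one ▸ (htail.tendsto 1).comp hinf
  · filter_upwards [eventually_gt_atTop 0] with r hr
    have htendsto : Tendsto (fun n => tail (I * r * cauchyG (ω n) (I * r))) atTop
        (𝓝 (tail (I * r * h (I * r)))) :=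
      (htail.tendsto _).comp ((hlim _ (im_I_mul_ofReal_pos hr)).const_mul _)
    rw [← htendsto.limsup_eq]
    exact limsup_le_limsup (.of_forall fun n => measure_norm_gt_le_cauchyG _ hr)

theorem tendsto_cauchyG {ι : Type*} {l : Filter ι} {ρ : ι → ProbabilityMeasure ℝ}
    {ν : ProbabilityMeasure ℝ} (hν : Tendsto ρ l (𝓝 ν)) {z : ℂ} (hz : 0 < z.im) :
    Tendsto (fun i => cauchyG (ρ i) z) l (𝓝 (cauchyG ν z)) :=
  (ProbabilityMeasure.tendsto_iff_forall_integral_rclike_tendsto ℂ).1 hν <|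
    .ofNormedAddCommGroup _ (continuous_inv_sub_ofReal hz) z.im⁻¹ (norm_inv_sub_ofReal_le hz)

theorem isCauchyTransform_of_tendsto_cauchyG
    (hlim : ∀ z : ℂ, 0 < z.im → Tendsto (fun n => cauchyG (ω n) z) atTop (𝓝 (h z)))
    (hinf : Tendsto (fun y : ℝ => I * y * h (I * y)) atTop (𝓝 1)) : IsCauchyTransform h := by
  have hcompact : IsCompact (closure (Set.range ω)) := by
    refine isCompact_closure_of_isTightMeasureSet ?_
    convert isTightMeasureSet_range_of_tendsto_cauchyG hlim hinf using 1
    ext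
    simp
  obtain ⟨ν, -, φ, hφ, hν⟩ := hcompact.tendsto_subseq fun n => subset_closure ⟨n, rfl⟩
  exact ⟨ν, fun z hz =>
    tendsto_nhds_unique (tendsto_cauchyG hν hz) ((hlim z hz).comp hφ.tendsto_atTop)⟩

end Limits

section Approximation

section DominatedConvergence

variable {Ω : Type*} [MeasurableSpace Ω] {P : Measure Ω} {X : ℕ → Ω → ℝ} {Y g : Ω → ℝ}

theorem tendsto_variance_of_dominated [IsProbabilityMeasure P]
    (hX : ∀ n, AEMeasurable (X n) P) (hg : MemLp g 2 P)
    (hbound : ∀ n, ∀ᵐ ω ∂P, ‖X n ω‖ ≤ g ω)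
    (hlim : ∀ᵐ ω ∂P, Tendsto (fun n => X n ω) atTop (𝓝 (Y ω))) :
    Tendsto (fun n => Var[X n; P]) atTop (𝓝 Var[Y; P]) := by
  have hXmem (n) : MemLp (X n) 2 P := hg.mono' (hX n).aestronglyMeasurable (hbound n)
  have hYbound : ∀ᵐ ω ∂P, ‖Y ω‖ ≤ g ω := by
    filter_upwards [ae_all_iff.2 hbound, hlim] with ω hω hωlim
    exact le_of_tendsto hωlim.norm (.of_forall hω)
  have hYmem : MemLp Y 2 P :=
    hg.mono' (aemeasurable_of_tendsto_metrizable_ae' hX hlim).aestronglyMeasurable hYbound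
  have hmean : Tendsto (fun n => ∫ ω, X n ω ∂P) atTop (𝓝 (∫ ω, Y ω ∂P)) :=
    tendsto_integral_of_dominated_convergence g (fun n => (hX n).aestronglyMeasurable)
      (hg.integrable one_le_two) hbound hlim
  have hsq : Tendsto (fun n => ∫ ω, X n ω ^ 2 ∂P) atTop (𝓝 (∫ ω, Y ω ^ 2 ∂P)) := by
    refine tendsto_integral_of_dominated_convergence (fun ω => g ω ^ 2)
      (fun n => ((hX n).pow_const 2).aestronglyMeasurable) hg.integrable_sq (fun n => ?_) ?_
    · filter_upwards [hbound n] with ω hω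
      rw [norm_pow]
      gcongr
    · filter_upwards [hlim] with ω hω using hω.pow 2
  rw [variance_eq_sub hYmem]
  exact (hsq.sub (hmean.pow 2)).congr fun n => (variance_eq_sub (hXmem n)).symm

theorem tendsto_cauchyG_map [IsFiniteMeasure P] (hX : ∀ n, AEMeasurable (X n) P)
    (hlim : ∀ᵐ ω ∂P, Tendsto (fun n => X n ω) atTop (𝓝 (Y ω))) {z : ℂ} (hz : 0 < z.im) :
    Tendsto (fun n => cauchyG (P.map (X n)) z) atTop (𝓝 (cauchyG (P.map Y) z)) := by
  rw [cauchyG_map (aemeasurable_of_tendsto_metrizable_ae' hX hlim) hz]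
  simp_rw [cauchyG_map (hX _) hz]
  refine tendsto_integral_of_dominated_convergence (fun _ => z.im⁻¹)
    (fun n => ((continuous_inv_sub_ofReal hz).measurable.comp_aemeasurable
      (hX n)).aestronglyMeasurable)
    (integrable_const _) (fun n => .of_forall fun ω => norm_inv_sub_ofReal_le hz _) ?_
  filter_upwards [hlim] with ω hω using ((continuous_inv_sub_ofReal hz).tendsto _).comp hω

theorem tendsto_strippedG_map [IsProbabilityMeasure P]
    (hX : ∀ n, AEMeasurable (X n) P) (hg : MemLp g 2 P)
    (hbound : ∀ n, ∀ᵐ ω ∂P, ‖X n ω‖ ≤ g ω)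
    (hlim : ∀ᵐ ω ∂P, Tendsto (fun n => X n ω) atTop (𝓝 (Y ω))) (hvar : Var[Y; P] ≠ 0) {z : ℂ}
    (hz : 0 < z.im) :
    Tendsto (fun n => strippedG (P.map (X n)) z) atTop (𝓝 (strippedG (P.map Y) z)) := by
  have hY := aemeasurable_of_tendsto_metrizable_ae' hX hlim
  have := Measure.isProbabilityMeasure_map hY
  have hmean : Tendsto (fun n => ∫ x, x ∂P.map (X n)) atTop (𝓝 (∫ x, x ∂P.map Y)) := by
    have hmap {Z : Ω → ℝ} (hZ : AEMeasurable Z P) : ∫ x, x ∂P.map Z = ∫ ω, Z ω ∂P :=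
      integral_map hZ aestronglyMeasurable_id
    simp_rw [hmap hY, hmap (hX _)]
    exact tendsto_integral_of_dominated_convergence g (fun n => (hX n).aestronglyMeasurable)
      (hg.integrable one_le_two) hbound hlim
  have hvariance : Tendsto (fun n => Var[id; P.map (X n)]) atTop (𝓝 Var[id; P.map Y]) := by
    rw [variance_id_map hY]
    simp_rw [variance_id_map (hX _)]
    exact tendsto_variance_of_dominated hX hg hbound hlim
  exact ((hmean.ofReal.const_sub z).sub ((tendsto_cauchyG_map hX hlim hz).inv₀
    (cauchyG_ne_zero hz))).div hvariance.ofReal (by rwa [variance_id_map hY, ofReal_ne_zero])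

end DominatedConvergence

theorem exists_simpleFunc_tendsto_norm_le {Ω : Type*} [MeasurableSpace Ω] {f : Ω → ℝ}
    (hf : Measurable f) :
    ∃ F : ℕ → SimpleFunc Ω ℝ,
      (∀ n x, ‖F n x‖ ≤ 2 * ‖f x‖) ∧ ∀ x, Tendsto (fun n => F n x) atTop (𝓝 (f x)) :=
  ⟨SimpleFunc.approxOn f hf Set.univ 0 trivial,
    fun n x => (SimpleFunc.norm_approxOn_zero_le hf (Set.mem_univ 0) x n).trans_eq (two_mul _).symm,
    fun _ => SimpleFunc.tendsto_approxOn hf (Set.mem_univ 0) (by simp)⟩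

theorem map_simpleFunc_compl_range {Ω E : Type*} [MeasurableSpace Ω] [MeasurableSpace E]
    [MeasurableSingletonClass E] (P : Measure Ω) (F : SimpleFunc Ω E) :
    P.map F (F.range : Set E)ᶜ = 0 := by
  rw [Measure.map_apply F.measurable F.range.measurableSet.compl, Set.preimage_compl,
    SimpleFunc.coe_range, Set.preimage_range, Set.compl_univ, measure_empty]

theorem isCauchyTransform_strippedG {μ : Measure ℝ} [IsProbabilityMeasure μ] (hμ : MemLp id 2 μ)
    (hvar : 0 < Var[id; μ]) : IsCauchyTransform (strippedG μ) := by
  obtain ⟨F, hbound, hlim⟩ := exists_simpleFunc_tendsto_norm_le (measurable_id (α := ℝ))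
  have hF (n) : AEMeasurable (F n) μ := (F n).measurable.aemeasurable
  have hg : MemLp (fun x : ℝ => 2 * ‖x‖) 2 μ := hμ.norm.const_mul 2
  have hvariance : Tendsto (fun n => Var[F n; μ]) atTop (𝓝 Var[id; μ]) :=
    tendsto_variance_of_dominated hF hg (fun n => .of_forall (hbound n)) (.of_forall hlim)
  obtain ⟨N, hN⟩ := eventually_atTop.1 (hvariance.eventually_const_lt hvar)
  have hstripped (n) : IsCauchyTransform (strippedG (μ.map (F (n + N)))) :=
    have := Measure.isProbabilityMeasure_map (hF (n + N))
    isCauchyTransform_strippedG_of_finset (map_simpleFunc_compl_range μ _)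
      (by rw [variance_id_map (hF _)]; exact hN _ le_add_self)
  choose ω hω using hstripped
  refine isCauchyTransform_of_tendsto_cauchyG (ω := ω) (fun z hz => ?_)
    (tendsto_I_mul_strippedG hμ hvar.ne')
  have h := tendsto_strippedG_map hF hg (fun n => .of_forall (hbound n)) (.of_forall hlim)
    hvar.ne' hz
  rw [Measure.map_id] at h
  exact (h.comp (tendsto_add_atTop_nat N)).congr fun n => (hω n z hz).symm

end Approximation

/-- For a non-degenerate probability measure `μ` with mean `β` and variance `α > 0`,
there is a probability measure `ω` with `G_μ(z) = 1/(z − β − α·G_ω(z))` on the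
upper half-plane. -/
theorem exists_measure_F_transform_converse (μ : Measure ℝ)
    (hμ : IsProbabilityMeasure μ) (hnd : ∀ a : ℝ, μ ≠ Measure.dirac a)
    (α β : ℝ) (hint : Integrable (fun x : ℝ => x ^ 2) μ)
    (hmean : (∫ x, x ∂μ) = β) (hvar : (∫ x, (x - β) ^ 2 ∂μ) = α) (hα : 0 < α) :
    ∃ ω : Measure ℝ, IsProbabilityMeasure ω ∧
      ∀ z : ℂ, 0 < z.im →
        cauchyG μ z = 1 / (z - (β : ℂ) - (α : ℂ) * cauchyG ω z) := by
  have hmem : MemLp id 2 μ := (memLp_two_iff_integrable_sq aestronglyMeasurable_id).2 hint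
  have hvariance : Var[id; μ] = α := by
    rw [variance_eq_integral aemeasurable_id, ← hvar, ← hmean]
    rfl
  obtain ⟨ω, hω⟩ := isCauchyTransform_strippedG hmem (hvariance ▸ hα)
  refine ⟨ω, inferInstance, fun z hz => ?_⟩
  have h := (eq_strippedG_iff (hvariance ▸ hα.ne') hz).1 (hω z hz)
  rw [hmean, hvariance] at h
  exact eq_one_div_of_mul_eq_one_left h
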